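/- arXiv:1611.06560 — 7 statements merged into one kernel-verified Lean document; each statement's English description precedes it below -/
import Mathlib

section
/- Let T be an invertible bounded linear operator on a complex Banach space X such that the spectrum of T is contained in the closed unit disk and ‖R(t,T)‖ ≤ C/|t−1| for every t ∈ ℂ with |t| > 1, where R(t,T) = (t·I − T)⁻¹ (i.e., T is a Ritt operator). Then: (i) for every t ≠ 0 such that 1/t lies in the resolvent set of T, the point t lies in the resolvent set of T⁻¹ and R(t,T⁻¹) = (−1/t)·T·R(1/t,T); (ii) every t ∈ (0,1] lies in the resolvent set of T⁻¹ + I and ‖R(t, T⁻¹ + I)‖ ≤ C‖T‖/t; in other words, T⁻¹ + I belongs to V_{(0,1]}(X) with constant C‖T‖. -/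
open Set

theorem inv_aux {R : Type*} [Ring R] (a b : R) (h1 : a * b = 1) (h2 : b * a = 1) :
    IsUnit a ∧ Ring.inverse a = b := by
  refine ⟨⟨⟨a, b, h1, h2⟩, rfl⟩, ?_⟩
  exact Ring.inverse_unit (⟨a, b, h1, h2⟩ : Rˣ)

theorem part_one {A : Type*} [Ring A] [Algebra ℂ A] (T S : A) (hTS : T * S = 1) (hST : S * T = 1)
    (t : ℂ) (ht : t ≠ 0) (h : (1 / t) ∈ resolventSet ℂ T) :
    t ∈ resolventSet ℂ S ∧ resolvent S t = (-(1 / t)) • (T * resolvent T (1 / t)) := by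
  have hu : IsUnit (algebraMap ℂ A (1 / t) - T) := h
  have e1 : (algebraMap ℂ A (1 / t) - T) * resolvent T (1 / t) = 1 := Ring.mul_inverse_cancel _ hu
  have e2 : resolvent T (1 / t) * (algebraMap ℂ A (1 / t) - T) = 1 := Ring.inverse_mul_cancel _ hu
  set R := resolvent T (1 / t) with hR
  have f1 : (algebraMap ℂ A t - S) * T = (-t) • (algebraMap ℂ A (1 / t) - T) := by
    rw [sub_mul, hST, Algebra.algebraMap_eq_smul_one, Algebra.algebraMap_eq_smul_one, smul_sub,
      smul_smul, smul_mul_assoc, one_mul]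
    have : -t * (1 / t) = -1 := by field_simp
    rw [this]; simp; abel
  have f2 : T * (algebraMap ℂ A t - S) = (-t) • (algebraMap ℂ A (1 / t) - T) := by
    rw [← f1, sub_mul, mul_sub, hTS, hST, Algebra.commutes]
  have c : T * R = R * T := by
    have : (algebraMap ℂ A (1 / t) - T) * T = T * (algebraMap ℂ A (1 / t) - T) := by
      rw [sub_mul, mul_sub, Algebra.commutes]
    calc T * R = R * ((algebraMap ℂ A (1 / t) - T) * T) * R := by rw [← mul_assoc, e2, one_mul]
      _ = R * T := by rw [this, mul_assoc, mul_assoc, e1, mul_one]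
  have k : -(1 / t) * -t = 1 := by field_simp
  apply inv_aux
  · rw [mul_smul_comm, ← mul_assoc, f1, smul_mul_assoc, e1, smul_smul, k, one_smul]
  · rw [c, smul_mul_assoc, mul_assoc, f2, mul_smul_comm, e2, smul_smul, k, one_smul]

/-- If `T` is an invertible Ritt operator on a complex Banach space (spectrum in the closed unit
disk and `‖R(t,T)‖ ≤ C/|t-1|` for `|t| > 1`), with (two-sided) inverse `S`, then:
(i) for every `t ≠ 0` with `1/t` in the resolvent set of `T`, the point `t` lies in the resolvent
set of `S = T⁻¹` and `R(t,T⁻¹) = (-1/t)·T·R(1/t,T)`;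
(ii) every `t ∈ (0,1]` lies in the resolvent set of `T⁻¹ + I` and
`‖R(t,T⁻¹+I)‖ ≤ C‖T‖/t`, i.e. `T⁻¹ + I ∈ V_{(0,1]}(X)` with constant `C‖T‖`. -/
theorem ritt_inverse_plus_one_memV {X : Type*} [NormedAddCommGroup X] [NormedSpace ℂ X]
    [CompleteSpace X] (T S : X →L[ℂ] X) (hTS : T * S = 1) (hST : S * T = 1) (C : ℝ)
    (hspec : spectrum ℂ T ⊆ Metric.closedBall (0 : ℂ) 1)
    (hritt : ∀ t : ℂ, 1 < ‖t‖ → ‖resolvent T t‖ ≤ C / ‖t - 1‖) :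
    (∀ t : ℂ, t ≠ 0 → (1 / t) ∈ resolventSet ℂ T →
      t ∈ resolventSet ℂ S ∧ resolvent S t = (-(1 / t)) • (T * resolvent T (1 / t))) ∧
    (∀ t : ℝ, t ∈ Ioc (0 : ℝ) 1 →
      (t : ℂ) ∈ resolventSet ℂ (S + 1) ∧ ‖resolvent (S + 1) (t : ℂ)‖ ≤ C * ‖T‖ / t) := by
  refine ⟨fun t ht h => part_one T S hTS hST t ht h, ?_⟩
  have hres : ∀ z : ℂ, 1 < ‖z‖ → z ∈ resolventSet ℂ T := by
    intro z hz
    by_contra hn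
    have := hspec (show z ∈ spectrum ℂ T from hn)
    simp at this
    linarith
  have hC : 0 ≤ C := by
    have h := (norm_nonneg _).trans (hritt 2 (by norm_num))
    norm_num at h
    exact h
  have hT := norm_nonneg T
  rintro t ⟨ht0, ht1⟩
  have hsub : algebraMap ℂ (X →L[ℂ] X) (t : ℂ) - (S + 1)
      = algebraMap ℂ (X →L[ℂ] X) ((t : ℂ) - 1) - S := by
    rw [map_sub, map_one]; abel
  have hmem : (t : ℂ) ∈ resolventSet ℂ (S + 1) ↔ ((t : ℂ) - 1) ∈ resolventSet ℂ S := by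
    rw [spectrum.mem_resolventSet_iff, spectrum.mem_resolventSet_iff, hsub]
  have hR : resolvent (S + 1) (t : ℂ) = resolvent S ((t : ℂ) - 1) := by
    simp only [resolvent, hsub]
  rw [hmem, hR]
  rcases eq_or_lt_of_le ht1 with rfl | hlt
  · have h := inv_aux (algebraMap ℂ (X →L[ℂ] X) (((1 : ℝ) : ℂ) - 1) - S) (-T)
      (by simp [hST]) (by simp [hTS])
    refine ⟨h.1, ?_⟩
    have h2 : resolvent S (((1 : ℝ) : ℂ) - 1) = -T := h.2
    rw [h2, norm_neg, div_one]
    by_contra hn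
    push Not at hn
    have key : ∀ n : ℝ, 1 < n → ‖T‖ * (n - 1) ≤ C * (‖T‖ * (n + ‖T‖)) := by
      intro n hn
      have hn' : 1 < ‖(n : ℂ)‖ := by
        rw [Complex.norm_real, Real.norm_of_nonneg (by linarith)]; exact hn
      have e1 : (algebraMap ℂ (X →L[ℂ] X) (n : ℂ) - T) * resolvent T (n : ℂ) = 1 :=
        Ring.mul_inverse_cancel _ (hres _ hn')
      have hr := hritt _ hn'
      have hnn : ‖(n : ℂ) - 1‖ = n - 1 := by
        rw [← Complex.ofReal_one, ← Complex.ofReal_sub, Complex.norm_real,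
          Real.norm_of_nonneg (by linarith)]
      rw [hnn, le_div_iff₀ (by linarith)] at hr
      have e2 : T = T * ((n : ℂ) • resolvent T (n : ℂ) - T * resolvent T (n : ℂ)) := by
        rw [sub_mul, Algebra.algebraMap_eq_smul_one, smul_mul_assoc, one_mul] at e1
        rw [e1, mul_one]
      have b : ‖T‖ ≤ ‖T‖ * (n * ‖resolvent T (n : ℂ)‖ + ‖T‖ * ‖resolvent T (n : ℂ)‖) := by
        conv_lhs => rw [e2]
        refine (norm_mul_le _ _).trans (mul_le_mul_of_nonneg_left ?_ hT)
        refine (norm_sub_le _ _).trans (add_le_add ?_ (norm_mul_le _ _))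
        rw [norm_smul, Complex.norm_real, Real.norm_of_nonneg (by linarith)]
      calc ‖T‖ * (n - 1)
          ≤ (‖T‖ * (n * ‖resolvent T (n : ℂ)‖ + ‖T‖ * ‖resolvent T (n : ℂ)‖)) * (n - 1) :=
            mul_le_mul_of_nonneg_right b (by linarith)
        _ = (‖resolvent T (n : ℂ)‖ * (n - 1)) * (‖T‖ * (n + ‖T‖)) := by ring
        _ ≤ _ := mul_le_mul_of_nonneg_right hr (by positivity)
    have hd : 0 < ‖T‖ - C * ‖T‖ := by linarith
    have hK : 0 ≤ C * ‖T‖ * ‖T‖ + ‖T‖ := by positivity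
    have h3 := key ((C * ‖T‖ * ‖T‖ + ‖T‖) / (‖T‖ - C * ‖T‖) + 2)
      (by have := div_nonneg hK hd.le; linarith)
    have h4 := div_mul_cancel₀ (C * ‖T‖ * ‖T‖ + ‖T‖) hd.ne'
    nlinarith
  · have hs : (t : ℂ) - 1 = ((t - 1 : ℝ) : ℂ) := by push_cast; rfl
    have hs0 : (t : ℂ) - 1 ≠ 0 := by
      rw [hs]; exact_mod_cast (by linarith : t - 1 < 0).ne
    have hns : ‖(t : ℂ) - 1‖ = 1 - t := by
      rw [hs, Complex.norm_real, Real.norm_eq_abs, abs_of_neg (by linarith)]; ring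
    have hz : 1 < ‖1 / ((t : ℂ) - 1)‖ := by
      rw [norm_div, norm_one, hns, lt_div_iff₀ (by linarith)]; linarith
    obtain ⟨h1, h2⟩ := part_one T S hTS hST _ hs0 (hres _ hz)
    refine ⟨h1, ?_⟩
    have hr := hritt _ hz
    have hq : ‖1 / ((t : ℂ) - 1) - 1‖ = (2 - t) / (1 - t) := by
      have : 1 / ((t : ℂ) - 1) - 1 = ((2 - t : ℝ) : ℂ) / ((t : ℂ) - 1) := by
        field_simp; push_cast; ring
      rw [this, norm_div, hns, Complex.norm_real, Real.norm_of_nonneg (by linarith)]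
    rw [hq] at hr
    rw [h2, norm_smul, norm_neg, norm_div, norm_one, hns]
    have p1 : 0 < 1 - t := by linarith
    have p2 : 0 < 2 - t := by linarith
    calc 1 / (1 - t) * ‖T * resolvent T (1 / ((t : ℂ) - 1))‖
        ≤ 1 / (1 - t) * (‖T‖ * (C / ((2 - t) / (1 - t)))) := by
          gcongr
          exact (norm_mul_le _ _).trans (mul_le_mul_of_nonneg_left hr hT)
      _ = C * ‖T‖ / (2 - t) := by field_simp
      _ ≤ C * ‖T‖ / t := by
          apply div_le_div_of_nonneg_left (by positivity) ht0; linarith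
end

section
/- Let A, B ∈ V_{(0,b]}(X) with constants M_A, M_B. Then ‖f(A) − f(B)‖ ≤ −(M_A + M_B + M_A·M_B) · f(−‖A−B‖), where for s ≥ 0 one has f(−s) = ∫₀^b (−s)/(t+s) dτ(t) ≤ 0. -/
open MeasureTheory Set Filter

/-- A bounded operator `A` belongs to `V_{(0,b]}(X)` with constant `M` if every `t ∈ (0,b]`
lies in the resolvent set of `A` and `‖R(t,A)‖ ≤ M/t`. -/
def MemV {X : Type*} [NormedAddCommGroup X] [NormedSpace ℂ X]
    (b M : ℝ) (A : X →L[ℂ] X) : Prop :=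
  ∀ t ∈ Ioc (0 : ℝ) b, (t : ℂ) ∈ resolventSet ℂ A ∧ ‖resolvent A (t : ℂ)‖ ≤ M / t

/-- For `f ∈ ZR(0,b]` with representing measure `τ`, the operator
`f(A) = ∫₀^b A·R(t,A) dτ(t)` (a Bochner integral in operator norm). -/
noncomputable def fOp {X : Type*} [NormedAddCommGroup X] [NormedSpace ℂ X] [CompleteSpace X]
    (τ : Measure ℝ) (b : ℝ) (A : X →L[ℂ] X) : X →L[ℂ] X :=
  ∫ t in Ioc (0 : ℝ) b, A * resolvent A (t : ℂ) ∂τ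

lemma aux_mul_res {X : Type*} [NormedAddCommGroup X] [NormedSpace ℂ X]
    (A : X →L[ℂ] X) (z : ℂ) (h : z ∈ resolventSet ℂ A) :
    A * resolvent A z = z • resolvent A z - 1 := by
  have h1 : (algebraMap ℂ (X →L[ℂ] X) z - A) * resolvent A z = 1 :=
    Ring.mul_inverse_cancel _ h
  rw [sub_mul, ← Algebra.smul_def] at h1
  rw [← h1]; abel

lemma aux_res_sub {X : Type*} [NormedAddCommGroup X] [NormedSpace ℂ X]
    (A B : X →L[ℂ] X) (z : ℂ) (hA : z ∈ resolventSet ℂ A) (hB : z ∈ resolventSet ℂ B) :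
    resolvent A z - resolvent B z = resolvent A z * (A - B) * resolvent B z := by
  have h1 : resolvent A z * (algebraMap ℂ (X →L[ℂ] X) z - A) = 1 :=
    Ring.inverse_mul_cancel _ hA
  have h2 : (algebraMap ℂ (X →L[ℂ] X) z - B) * resolvent B z = 1 :=
    Ring.mul_inverse_cancel _ hB
  have h3 : A - B = (algebraMap ℂ (X →L[ℂ] X) z - B) - (algebraMap ℂ (X →L[ℂ] X) z - A) := by
    abel
  rw [h3, mul_sub, sub_mul, h1, mul_assoc, h2, mul_one, one_mul]

lemma aux_int {X : Type*} [NormedAddCommGroup X] [NormedSpace ℂ X]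
    [CompleteSpace X] (b : ℝ) (τ : Measure ℝ) [IsFiniteMeasure τ]
    (M : ℝ) (A : X →L[ℂ] X) (hA : MemV b M A) :
    IntegrableOn (fun t : ℝ => A * resolvent A (t : ℂ)) (Ioc 0 b) τ := by
  have hc : ContinuousOn (fun t : ℝ => A * resolvent A (t : ℂ)) (Ioc 0 b) := by
    refine continuousOn_const.mul fun t ht => ContinuousAt.continuousWithinAt ?_
    obtain ⟨u, hu⟩ := (hA t ht).1
    have h1 : ContinuousAt Ring.inverse (algebraMap ℂ (X →L[ℂ] X) (t : ℂ) - A) := by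
      rw [← hu]; exact NormedRing.inverse_continuousAt u
    have h2 : ContinuousAt (fun t : ℝ => algebraMap ℂ (X →L[ℂ] X) (t : ℂ) - A) t := by
      refine ContinuousAt.sub ?_ continuousAt_const
      exact ((continuous_algebraMap ℂ (X →L[ℂ] X)).comp Complex.continuous_ofReal).continuousAt
    exact ContinuousAt.comp (f := fun t : ℝ => algebraMap ℂ (X →L[ℂ] X) (t : ℂ) - A) h1 h2
  refine Integrable.of_bound (hc.aestronglyMeasurable measurableSet_Ioc)
    (M + ‖(1 : X →L[ℂ] X)‖) ?_
  filter_upwards [ae_restrict_mem measurableSet_Ioc] with t ht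
  obtain ⟨h1, h2⟩ := hA t ht
  rw [aux_mul_res A _ h1]
  refine (norm_sub_le _ _).trans (add_le_add_left ?_ _)
  rw [norm_smul, Complex.norm_real, Real.norm_of_nonneg ht.1.le]
  rwa [le_div_iff₀ ht.1, mul_comm] at h2

/-- Theorem 1: for `A, B ∈ V_{(0,b]}(X)` with constants `M_A, M_B`,
`‖f(A) − f(B)‖ ≤ −(M_A + M_B + M_A·M_B)·f(−‖A−B‖)`, where
`f(−s) = ∫₀^b (−s)/(t+s) dτ(t)`. -/
theorem norm_fOp_sub_fOp_le {X : Type*} [NormedAddCommGroup X] [NormedSpace ℂ X]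
    [CompleteSpace X] (b : ℝ) (hb : 0 < b) (τ : Measure ℝ) [IsFiniteMeasure τ]
    (hτ : IntegrableOn (fun t : ℝ => 1 / t) (Ioc 0 b) τ)
    (MA MB : ℝ) (hMA : 0 < MA) (hMB : 0 < MB)
    (A B : X →L[ℂ] X) (hA : MemV b MA A) (hB : MemV b MB B) :
    ‖fOp τ b A - fOp τ b B‖ ≤
      -((MA + MB + MA * MB) *
        ∫ t in Ioc (0 : ℝ) b, (-‖A - B‖) / (t + ‖A - B‖) ∂τ) := by
  set s := ‖A - B‖ with hs
  have hs0 : 0 ≤ s := norm_nonneg _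
  have key : ∀ t ∈ Ioc (0 : ℝ) b, ‖A * resolvent A (t : ℂ) - B * resolvent B (t : ℂ)‖ ≤
      (-(MA + MB + MA * MB)) * (-s / (t + s)) := by
    intro t ht
    obtain ⟨a1, a2⟩ := hA t ht
    obtain ⟨b1, b2⟩ := hB t ht
    have ht0 := ht.1
    have e : A * resolvent A (t : ℂ) - B * resolvent B (t : ℂ) =
        (t : ℂ) • (resolvent A (t : ℂ) - resolvent B (t : ℂ)) := by
      rw [aux_mul_res A _ a1, aux_mul_res B _ b1, smul_sub]; abel
    have en : ‖A * resolvent A (t : ℂ) - B * resolvent B (t : ℂ)‖ =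
        t * ‖resolvent A (t : ℂ) - resolvent B (t : ℂ)‖ := by
      rw [e, norm_smul, Complex.norm_real, Real.norm_of_nonneg ht0.le]
    rw [en]
    have n1 : ‖resolvent A (t : ℂ) - resolvent B (t : ℂ)‖ ≤ MA / t + MB / t :=
      (norm_sub_le _ _).trans (add_le_add a2 b2)
    have n2 : ‖resolvent A (t : ℂ) - resolvent B (t : ℂ)‖ ≤ MA / t * s * (MB / t) := by
      rw [aux_res_sub A B _ a1 b1]
      refine (norm_mul_le _ _).trans ?_
      refine mul_le_mul ((norm_mul_le _ _).trans ?_) b2 (norm_nonneg _) (by positivity)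
      exact mul_le_mul_of_nonneg_right a2 hs0
    set N := ‖resolvent A (t : ℂ) - resolvent B (t : ℂ)‖
    have m1 : t * N ≤ MA + MB := by
      have := mul_le_mul_of_nonneg_left n1 ht0.le
      have e1 : t * (MA / t + MB / t) = MA + MB := by field_simp
      linarith
    have m2 : t * N * t ≤ MA * MB * s := by
      have := mul_le_mul_of_nonneg_left n2 (mul_pos ht0 ht0).le
      have e1 : t * t * (MA / t * s * (MB / t)) = MA * MB * s := by field_simp
      linarith
    have e2 : (-(MA + MB + MA * MB)) * (-s / (t + s)) = (MA + MB + MA * MB) * s / (t + s) := by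
      ring
    rw [e2, le_div_iff₀ (by linarith)]
    have := mul_le_mul_of_nonneg_right m1 hs0
    linarith
  have hint : IntegrableOn (fun t : ℝ => -s / (t + s)) (Ioc 0 b) τ := by
    refine Measure.integrableOn_of_bounded (M := 1) (measure_ne_top _ _) ?_ ?_
    · exact (by fun_prop : Measurable (fun t : ℝ => -s / (t + s))).aestronglyMeasurable
    · filter_upwards [ae_restrict_mem measurableSet_Ioc] with t ht
      have ht0 := ht.1
      rw [norm_div, norm_neg, Real.norm_of_nonneg hs0, Real.norm_of_nonneg (by linarith),
        div_le_one (by linarith)]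
      linarith
  unfold fOp
  rw [← integral_sub (aux_int b τ MA A hA) (aux_int b τ MB B hB), ← neg_mul,
    ← integral_const_mul]
  refine norm_integral_le_of_norm_le (hint.const_mul _) ?_
  filter_upwards [ae_restrict_mem measurableSet_Ioc] with t ht
  exact key t ht
end

section
/- (Moment inequality.) Let A ∈ V_{(0,b]}(X) with constant M_A. Then for every x ∈ X with ‖x‖ = 1, ‖f(A)x‖ ≤ −(2·M_A + 1) · f(−‖Ax‖), where for s ≥ 0 one has f(−s) = ∫₀^b (−s)/(t+s) dτ(t) ≤ 0. -/
open MeasureTheory Set Filter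

/-- Corollary 1 (moment inequality): for `A ∈ V_{(0,b]}(X)` and a unit vector `x`,
`‖f(A)x‖ ≤ −(2M_A + 1)·f(−‖Ax‖)`. -/
theorem moment_inequality {X : Type*} [NormedAddCommGroup X] [NormedSpace ℂ X]
    [CompleteSpace X] (b : ℝ) (hb : 0 < b) (τ : Measure ℝ) [IsFiniteMeasure τ]
    (hτ : IntegrableOn (fun t : ℝ => 1 / t) (Ioc 0 b) τ)
    (MA : ℝ) (hMA : 0 < MA) (A : X →L[ℂ] X) (hA : MemV b MA A) :
    ∀ x : X, ‖x‖ = 1 →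
      ‖fOp τ b A x‖ ≤
        -((2 * MA + 1) * ∫ t in Ioc (0 : ℝ) b, (-‖A x‖) / (t + ‖A x‖) ∂τ) := by
  intro x hx
  set s : ℝ := ‖A x‖ with hs
  have hs0 : 0 ≤ s := norm_nonneg _
  have key : ∀ t ∈ Ioc (0 : ℝ) b,
      ‖(A * resolvent A (t : ℂ)) x‖ ≤ (2 * MA + 1) * (s / (t + s)) := by
    intro t ht
    obtain ⟨h1, h2⟩ := hA t ht
    have ht0 : 0 < t := ht.1
    have hu : IsUnit (algebraMap ℂ (X →L[ℂ] X) (t : ℂ) - A) := h1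
    set R := resolvent A (t : ℂ) with hR
    have e1 : (algebraMap ℂ (X →L[ℂ] X) (t : ℂ) - A) * R = 1 := Ring.mul_inverse_cancel _ hu
    have e2 : R * (algebraMap ℂ (X →L[ℂ] X) (t : ℂ) - A) = 1 := Ring.inverse_mul_cancel _ hu
    have hc : (algebraMap ℂ (X →L[ℂ] X) (t : ℂ)) * R = R * (algebraMap ℂ (X →L[ℂ] X) (t : ℂ)) :=
      Algebra.commutes _ _
    have e3 : A * R = R * A := by
      rw [sub_mul] at e1
      rw [mul_sub, ← hc] at e2
      have := e1.trans e2.symm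
      exact sub_right_injective this
    have e4 : A * R = (t : ℂ) • R - 1 := by
      rw [sub_mul, ← Algebra.smul_def] at e1
      rw [← e1]; abel
    have b1 : ‖(A * R) x‖ ≤ MA / t * s := by
      rw [e3]
      exact (R.le_opNorm (A x)).trans (mul_le_mul_of_nonneg_right h2 hs0)
    have b2 : ‖(A * R) x‖ ≤ MA + 1 := by
      rw [e4]
      have h3 : ‖R x‖ ≤ MA / t := by
        have := R.le_opNorm x
        rw [hx, mul_one] at this
        exact this.trans h2
      have h4 : ‖((t : ℂ) • R - 1) x‖ ≤ ‖(t : ℂ) • R x‖ + ‖x‖ := norm_sub_le _ _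
      rw [norm_smul, hx, Complex.norm_real, Real.norm_of_nonneg ht0.le] at h4
      have h5 : t * ‖R x‖ ≤ t * (MA / t) := mul_le_mul_of_nonneg_left h3 ht0.le
      rw [mul_div_cancel₀ _ ht0.ne'] at h5
      linarith
    have b3 : t * ‖(A * R) x‖ ≤ MA * s := by
      have := mul_le_mul_of_nonneg_left b1 ht0.le
      have e : t * (MA / t * s) = MA * s := by field_simp
      linarith
    have b4 := mul_le_mul_of_nonneg_left b2 hs0
    rw [← mul_div_assoc, le_div_iff₀ (by linarith)]
    nlinarith
  have rhs : -((2 * MA + 1) * ∫ t in Ioc (0 : ℝ) b, (-s) / (t + s) ∂τ)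
      = ∫ t in Ioc (0 : ℝ) b, (2 * MA + 1) * (s / (t + s)) ∂τ := by
    simp only [neg_div]
    rw [integral_neg, integral_const_mul]
    ring
  rw [rhs]
  have hmem : ∀ᵐ t ∂(τ.restrict (Ioc (0 : ℝ) b)), t ∈ Ioc (0 : ℝ) b :=
    ae_restrict_mem measurableSet_Ioc
  have hbd : ∀ t ∈ Ioc (0 : ℝ) b, 0 ≤ s / (t + s) ∧ s / (t + s) ≤ 1 := by
    intro t ht
    have ht0 : 0 < t := ht.1
    exact ⟨by positivity, by rw [div_le_one (by linarith)]; linarith⟩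
  have hint : Integrable (fun t : ℝ => (2 * MA + 1) * (s / (t + s)))
      (τ.restrict (Ioc (0 : ℝ) b)) := by
    apply Integrable.const_mul
    refine Integrable.of_bound (C := 1) (by
      exact (measurable_const.div (measurable_id.add_const s)).aestronglyMeasurable) ?_
    filter_upwards [hmem] with t ht
    rw [Real.norm_of_nonneg (hbd t ht).1]
    exact (hbd t ht).2
  unfold fOp
  by_cases hF : Integrable (fun t : ℝ => A * resolvent A (t : ℂ)) (τ.restrict (Ioc (0 : ℝ) b))
  · rw [ContinuousLinearMap.integral_apply hF]
    refine norm_integral_le_of_norm_le hint ?_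
    filter_upwards [hmem] with t ht using key t ht
  · rw [integral_undef hF]
    simp only [ContinuousLinearMap.zero_apply, norm_zero]
    refine integral_nonneg_of_ae ?_
    filter_upwards [hmem] with t ht
    exact mul_nonneg (by linarith) (hbd t ht).1
end

section
/- Let A ∈ V_{(0,b]}(X) with constant M_A. Then for every x ∈ X with ‖x‖ = 1, ‖f(A)x‖ ≤ (2·M_A + 1) · f′(−0) · ‖Ax‖, where f′(−0) := ∫₀^b (1/t) dτ(t). -/
open MeasureTheory Set Filter

/-- Corollary 2: for `A ∈ V_{(0,b]}(X)` and a unit vector `x`,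
`‖f(A)x‖ ≤ (2M_A + 1)·f′(−0)·‖Ax‖`, where `f′(−0) = ∫₀^b (1/t) dτ(t)`. -/
theorem moment_inequality_linear {X : Type*} [NormedAddCommGroup X] [NormedSpace ℂ X]
    [CompleteSpace X] (b : ℝ) (hb : 0 < b) (τ : Measure ℝ) [IsFiniteMeasure τ]
    (hτ : IntegrableOn (fun t : ℝ => 1 / t) (Ioc 0 b) τ)
    (MA : ℝ) (hMA : 0 < MA) (A : X →L[ℂ] X) (hA : MemV b MA A) :
    ∀ x : X, ‖x‖ = 1 →
      ‖fOp τ b A x‖ ≤ (2 * MA + 1) * (∫ t in Ioc (0 : ℝ) b, 1 / t ∂τ) * ‖A x‖ := by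
  intro x _
  have hnn : 0 ≤ ∫ t in Ioc (0 : ℝ) b, 1 / t ∂τ :=
    setIntegral_nonneg measurableSet_Ioc fun t ht => one_div_nonneg.2 ht.1.le
  by_cases hi : IntegrableOn (fun t : ℝ => A * resolvent A (t : ℂ)) (Ioc 0 b) τ
  · have h1 : fOp τ b A x = ∫ t in Ioc (0 : ℝ) b, (A * resolvent A (t : ℂ)) x ∂τ :=
      ContinuousLinearMap.integral_apply hi x
    have h2 : ‖fOp τ b A x‖ ≤ ∫ t in Ioc (0 : ℝ) b, (MA * ‖A x‖) * (1 / t) ∂τ := by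
      rw [h1]
      refine norm_integral_le_of_norm_le (hτ.const_mul (MA * ‖A x‖)) ?_
      refine (ae_restrict_iff' measurableSet_Ioc).2 (Eventually.of_forall fun t ht => ?_)
      have hc : A * resolvent A (t : ℂ) = resolvent A (t : ℂ) * A := by
        have h : Commute A (algebraMap ℂ (X →L[ℂ] X) (t : ℂ) - A) :=
          Commute.sub_right (Algebra.commutes (t : ℂ) A).symm (Commute.refl A)
        obtain ⟨u, hu⟩ := (hA t ht).1
        rw [← hu] at h
        have hr : resolvent A (t : ℂ) = ↑u⁻¹ := by
          rw [resolvent, ← hu, Ring.inverse_unit]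
        rw [hr]
        exact h.units_inv_right
      rw [hc]
      calc ‖(resolvent A (t : ℂ) * A) x‖ ≤ ‖resolvent A (t : ℂ)‖ * ‖A x‖ :=
            (resolvent A (t : ℂ)).le_opNorm (A x)
        _ ≤ MA / t * ‖A x‖ := by
            gcongr
            exact (hA t ht).2
        _ = (MA * ‖A x‖) * (1 / t) := by ring
    rw [integral_const_mul] at h2
    have h3 : 0 ≤ (MA + 1) * ((∫ t in Ioc (0 : ℝ) b, 1 / t ∂τ) * ‖A x‖) := by positivity
    linarith
  · have h0 : fOp τ b A = 0 := integral_undef hi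
    rw [h0]
    simp only [zero_apply, norm_zero]
    positivity
end

section
/- (Operator Lipschitzness.) Let A, B ∈ V_{(0,b]}(X) with constants M_A, M_B. Then ‖f(A) − f(B)‖ ≤ M_A · M_B · f′(−0) · ‖A − B‖, where f′(−0) := ∫₀^b (1/t) dτ(t). -/
open MeasureTheory Set Filter

theorem fOp_integrableOn_aux {X : Type*} [NormedAddCommGroup X] [NormedSpace ℂ X]
    [CompleteSpace X] (b : ℝ) (τ : Measure ℝ)
    (hτ : IntegrableOn (fun t : ℝ => 1 / t) (Ioc 0 b) τ)
    (M : ℝ) (A : X →L[ℂ] X) (hA : MemV b M A) :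
    IntegrableOn (fun t : ℝ => A * resolvent A (t : ℂ)) (Ioc 0 b) τ := by
  have hc : ContinuousOn (fun t : ℝ => A * resolvent A (t : ℂ)) (Ioc 0 b) := by
    intro t ht
    have h1 : ContinuousAt (resolvent A) (t : ℂ) :=
      (spectrum.hasDerivAt_resolvent (hA t ht).1).continuousAt
    have h2 : ContinuousAt (fun t : ℝ => resolvent A (t : ℂ)) t :=
      ContinuousAt.comp (f := fun t : ℝ => (t : ℂ)) h1 Complex.continuous_ofReal.continuousAt
    exact (continuousAt_const.mul h2).continuousWithinAt
  refine Integrable.mono' (hτ.const_mul (‖A‖ * M))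
    (hc.aestronglyMeasurable measurableSet_Ioc) ?_
  refine (ae_restrict_iff' measurableSet_Ioc).2 (Eventually.of_forall fun t ht => ?_)
  calc ‖A * resolvent A (t : ℂ)‖ ≤ ‖A‖ * ‖resolvent A (t : ℂ)‖ := norm_mul_le _ _
    _ ≤ ‖A‖ * (M / t) := mul_le_mul_of_nonneg_left (hA t ht).2 (norm_nonneg _)
    _ = ‖A‖ * M * (1 / t) := by ring

theorem fOp_resolvent_aux {R : Type*} [Ring R] [Algebra ℂ R] (A B : R) (t : ℂ)
    (hA : t ∈ resolventSet ℂ A) (hB : t ∈ resolventSet ℂ B) :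
    A * resolvent A t - B * resolvent B t
      = t • (resolvent A t * (A - B) * resolvent B t) := by
  have a1 : (algebraMap ℂ R t - A) * resolvent A t = 1 := Ring.mul_inverse_cancel _ hA
  have a2 : resolvent A t * (algebraMap ℂ R t - A) = 1 := Ring.inverse_mul_cancel _ hA
  have b1 : (algebraMap ℂ R t - B) * resolvent B t = 1 := Ring.mul_inverse_cancel _ hB
  have e1 : A * resolvent A t = t • resolvent A t - 1 := by
    rw [sub_mul, ← Algebra.smul_def] at a1
    rw [← a1]; abel
  have e2 : B * resolvent B t = t • resolvent B t - 1 := by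
    rw [sub_mul, ← Algebra.smul_def] at b1
    rw [← b1]; abel
  have e3 : resolvent A t * (A - B) * resolvent B t = resolvent A t - resolvent B t := by
    have : A - B = (algebraMap ℂ R t - B) - (algebraMap ℂ R t - A) := by abel
    rw [this, mul_sub, sub_mul, mul_assoc, b1, a2, mul_one, one_mul]
  rw [e1, e2, e3, smul_sub]; abel

/-- Theorem 3 (operator Lipschitzness, operator-norm case): for `A, B ∈ V_{(0,b]}(X)`,
`‖f(A) − f(B)‖ ≤ M_A·M_B·f′(−0)·‖A − B‖`, where `f′(−0) = ∫₀^b (1/t) dτ(t)`. -/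
theorem fOp_lipschitz {X : Type*} [NormedAddCommGroup X] [NormedSpace ℂ X]
    [CompleteSpace X] (b : ℝ) (hb : 0 < b) (τ : Measure ℝ) [IsFiniteMeasure τ]
    (hτ : IntegrableOn (fun t : ℝ => 1 / t) (Ioc 0 b) τ)
    (MA MB : ℝ) (hMA : 0 < MA) (hMB : 0 < MB)
    (A B : X →L[ℂ] X) (hA : MemV b MA A) (hB : MemV b MB B) :
    ‖fOp τ b A - fOp τ b B‖ ≤ MA * MB * (∫ t in Ioc (0 : ℝ) b, 1 / t ∂τ) * ‖A - B‖ := by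
  unfold fOp
  rw [← integral_sub (fOp_integrableOn_aux b τ hτ MA A hA) (fOp_integrableOn_aux b τ hτ MB B hB)]
  have key : ‖∫ t in Ioc (0 : ℝ) b, (A * resolvent A (t : ℂ) - B * resolvent B (t : ℂ)) ∂τ‖
      ≤ ∫ t in Ioc (0 : ℝ) b, (MA * MB * ‖A - B‖) * (1 / t) ∂τ := by
    refine norm_integral_le_of_norm_le (hτ.const_mul _) ?_
    refine (ae_restrict_iff' measurableSet_Ioc).2 (Eventually.of_forall fun t ht => ?_)
    have ht0 : 0 < t := ht.1
    rw [fOp_resolvent_aux A B t (hA t ht).1 (hB t ht).1, norm_smul, Complex.norm_real,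
      Real.norm_of_nonneg ht0.le]
    have h1 := (hA t ht).2
    have h2 := (hB t ht).2
    calc t * ‖resolvent A (t : ℂ) * (A - B) * resolvent B (t : ℂ)‖
        ≤ t * ((MA / t) * ‖A - B‖ * (MB / t)) := by
          refine mul_le_mul_of_nonneg_left ?_ ht0.le
          refine (norm_mul_le _ _).trans ?_
          refine mul_le_mul ((norm_mul_le _ _).trans ?_) h2 (norm_nonneg _) (by positivity)
          exact mul_le_mul_of_nonneg_right h1 (norm_nonneg _)
      _ = MA * MB * ‖A - B‖ * (1 / t) := by field_simp
  rw [integral_const_mul] at key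
  calc _ ≤ _ := key
    _ = _ := by ring
end

section
/- (Stability.) Let c > 0 and let (A_n) and (B_n) be sequences of operators in V_{(0,b]}(X) whose constants satisfy M_{A_n} ≤ c and M_{B_n} ≤ c for all n. If ‖A_n − B_n‖ → 0 as n → ∞, then ‖f(A_n) − f(B_n)‖ → 0 as n → ∞. -/
open MeasureTheory Set Filter

lemma fOp_aux_int {X : Type*} [NormedAddCommGroup X] [NormedSpace ℂ X]
    [CompleteSpace X] (b : ℝ) (τ : Measure ℝ)
    (hτ : IntegrableOn (fun t : ℝ => 1 / t) (Ioc 0 b) τ)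
    (c : ℝ) (A : X →L[ℂ] X) (hA : MemV b c A) :
    IntegrableOn (fun t : ℝ => A * resolvent A (t : ℂ)) (Ioc 0 b) τ := by
  have hcont : ContinuousOn (fun t : ℝ => A * resolvent A (t : ℂ)) (Ioc 0 b) := by
    intro t ht
    have h1 : ContinuousAt (resolvent A) (t : ℂ) :=
      (spectrum.hasDerivAt_resolvent (hA t ht).1).continuousAt
    have h2 : ContinuousAt (fun s : ℝ => resolvent A (s : ℂ)) t :=
      ContinuousAt.comp (f := fun s : ℝ => (s : ℂ)) h1 Complex.continuous_ofReal.continuousAt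
    exact (continuousAt_const.mul h2).continuousWithinAt
  refine Integrable.mono' (hτ.const_mul (‖A‖ * c))
    (hcont.aestronglyMeasurable measurableSet_Ioc) ?_
  refine (ae_restrict_mem measurableSet_Ioc).mono fun t ht => ?_
  calc ‖A * resolvent A (t : ℂ)‖ ≤ ‖A‖ * ‖resolvent A (t : ℂ)‖ := norm_mul_le _ _
    _ ≤ ‖A‖ * (c / t) := by gcongr; exact (hA t ht).2
    _ = ‖A‖ * c * (1 / t) := by ring

lemma fOp_aux_id {R : Type*} [Ring R] [Algebra ℂ R] (A B : R) (z : ℂ)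
    (hA : z ∈ resolventSet ℂ A) (hB : z ∈ resolventSet ℂ B) :
    A * resolvent A z - B * resolvent B z =
      z • (resolvent A z * (A - B) * resolvent B z) := by
  have a1 : (algebraMap ℂ R z - A) * resolvent A z = 1 := Ring.mul_inverse_cancel _ hA
  have a2 : resolvent A z * (algebraMap ℂ R z - A) = 1 := Ring.inverse_mul_cancel _ hA
  have b1 : (algebraMap ℂ R z - B) * resolvent B z = 1 := Ring.mul_inverse_cancel _ hB
  have a3 : A * resolvent A z = z • resolvent A z - 1 := by
    rw [← a1, sub_mul, Algebra.smul_def]; abel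
  have b3 : B * resolvent B z = z • resolvent B z - 1 := by
    rw [← b1, sub_mul, Algebra.smul_def]; abel
  have h : A - B = (algebraMap ℂ R z - B) - (algebraMap ℂ R z - A) := by abel
  rw [a3, b3, h, mul_sub, sub_mul, a2, mul_assoc, b1, mul_one, one_mul, smul_sub]
  abel

lemma fOp_aux_bound {X : Type*} [NormedAddCommGroup X] [NormedSpace ℂ X]
    [CompleteSpace X] (b : ℝ) (τ : Measure ℝ)
    (hτ : IntegrableOn (fun t : ℝ => 1 / t) (Ioc 0 b) τ)
    (c : ℝ) (hc : 0 < c) (A B : X →L[ℂ] X) (hA : MemV b c A) (hB : MemV b c B) :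
    ‖fOp τ b A - fOp τ b B‖ ≤ (c ^ 2 * ∫ t in Ioc 0 b, 1 / t ∂τ) * ‖A - B‖ := by
  unfold fOp
  rw [← integral_sub (fOp_aux_int b τ hτ c A hA) (fOp_aux_int b τ hτ c B hB)]
  have : (c ^ 2 * ∫ t in Ioc 0 b, 1 / t ∂τ) * ‖A - B‖
      = ∫ t in Ioc 0 b, (c ^ 2 * ‖A - B‖) * (1 / t) ∂τ := by
    rw [integral_const_mul]; ring
  rw [this]
  refine norm_integral_le_of_norm_le (hτ.const_mul _) ?_
  refine (ae_restrict_mem measurableSet_Ioc).mono fun t ht => ?_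
  have ht0 : 0 < t := ht.1
  rw [fOp_aux_id A B _ (hA t ht).1 (hB t ht).1, norm_smul, Complex.norm_real,
    Real.norm_of_nonneg ht0.le]
  calc t * ‖resolvent A (t : ℂ) * (A - B) * resolvent B (t : ℂ)‖
      ≤ t * (‖resolvent A (t : ℂ)‖ * ‖A - B‖ * ‖resolvent B (t : ℂ)‖) := by
        gcongr
        exact (norm_mul_le _ _).trans (by gcongr; exact norm_mul_le _ _)
    _ ≤ t * ((c / t) * ‖A - B‖ * (c / t)) := by
        gcongr
        · exact (hA t ht).2
        · exact (hB t ht).2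
    _ = c ^ 2 * ‖A - B‖ * (1 / t) := by field_simp

/-- Corollary 3 (stability): if `A_n, B_n ∈ V_{(0,b]}(X)` with constants bounded by `c` and
`‖A_n − B_n‖ → 0`, then `‖f(A_n) − f(B_n)‖ → 0`. -/
theorem fOp_stability {X : Type*} [NormedAddCommGroup X] [NormedSpace ℂ X]
    [CompleteSpace X] (b : ℝ) (hb : 0 < b) (τ : Measure ℝ) [IsFiniteMeasure τ]
    (hτ : IntegrableOn (fun t : ℝ => 1 / t) (Ioc 0 b) τ)
    (c : ℝ) (hc : 0 < c) (A B : ℕ → X →L[ℂ] X)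
    (hA : ∀ n, MemV b c (A n)) (hB : ∀ n, MemV b c (B n))
    (hconv : Tendsto (fun n => ‖A n - B n‖) atTop (nhds 0)) :
    Tendsto (fun n => ‖fOp τ b (A n) - fOp τ b (B n)‖) atTop (nhds 0) := by
  refine squeeze_zero (fun _ => norm_nonneg _)
    (fun n => fOp_aux_bound b τ hτ c hc (A n) (B n) (hA n) (hB n)) ?_
  simpa using hconv.const_mul (c ^ 2 * ∫ t in Ioc 0 b, 1 / t ∂τ)
end

section
/- (Commutator Lipschitzness.) Let U be an invertible bounded linear operator on X (with bounded inverse) and let A ∈ V_{(0,b]}(X) with constant M_A. Then ‖[f(A), U]‖ ≤ M_A² · f′(−0) · ‖[A, U]‖, where [S,T] := ST − TS and f′(−0) := ∫₀^b (1/t) dτ(t). -/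
open MeasureTheory Set Filter

theorem comm_pointwise {X : Type*} [NormedAddCommGroup X] [NormedSpace ℂ X]
    (U A : X →L[ℂ] X) (z : ℂ) (hz : z ∈ resolventSet ℂ A) :
    A * resolvent A z * U - U * (A * resolvent A z) =
      z • (resolvent A z * (A * U - U * A) * resolvent A z) := by
  have hu : IsUnit (algebraMap ℂ (X →L[ℂ] X) z - A) := hz
  have h1 : (algebraMap ℂ (X →L[ℂ] X) z - A) * resolvent A z = 1 := Ring.mul_inverse_cancel _ hu
  have h2 : resolvent A z * (algebraMap ℂ (X →L[ℂ] X) z - A) = 1 := Ring.inverse_mul_cancel _ hu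
  generalize resolvent A z = R at *
  rw [Algebra.algebraMap_eq_smul_one, sub_mul, smul_mul_assoc, one_mul] at h1
  rw [Algebra.algebraMap_eq_smul_one, mul_sub, mul_smul_comm, mul_one] at h2
  have h3 : A * R = z • R - 1 := by rw [← h1]; abel
  have h4 : R * A = z • R - 1 := by rw [← h2]; abel
  have h5 : R * (A * U - U * A) * R = (R * A) * U * R - R * U * (A * R) := by noncomm_ring
  rw [h5, h3, h4]
  simp only [sub_mul, mul_sub, smul_mul_assoc, mul_smul_comm, one_mul, mul_one, mul_assoc, smul_sub]
  abel

/-- Corollary 4 (commutator Lipschitzness, operator-norm case): for an automorphism `U` of `X`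
and `A ∈ V_{(0,b]}(X)`, `‖[f(A),U]‖ ≤ M_A²·f′(−0)·‖[A,U]‖`. -/
theorem fOp_commutator_lipschitz {X : Type*} [NormedAddCommGroup X] [NormedSpace ℂ X]
    [CompleteSpace X] (b : ℝ) (hb : 0 < b) (τ : Measure ℝ) [IsFiniteMeasure τ]
    (hτ : IntegrableOn (fun t : ℝ => 1 / t) (Ioc 0 b) τ)
    (U V : X →L[ℂ] X) (hUV : U * V = 1) (hVU : V * U = 1)
    (MA : ℝ) (hMA : 0 < MA) (A : X →L[ℂ] X) (hA : MemV b MA A) :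
    ‖fOp τ b A * U - U * fOp τ b A‖ ≤
      MA ^ 2 * (∫ t in Ioc (0 : ℝ) b, 1 / t ∂τ) * ‖A * U - U * A‖ := by
  have hI : 0 ≤ ∫ t in Ioc (0 : ℝ) b, 1 / t ∂τ :=
    setIntegral_nonneg measurableSet_Ioc fun t ht => one_div_nonneg.2 ht.1.le
  by_cases hint : IntegrableOn (fun t : ℝ => A * resolvent A (t : ℂ)) (Ioc 0 b) τ
  · have e1 : fOp τ b A * U = ∫ t in Ioc (0 : ℝ) b, A * resolvent A (t : ℂ) * U ∂τ :=
      (((ContinuousLinearMap.mul ℂ (X →L[ℂ] X)).flip U).integral_comp_comm hint).symm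
    have e2 : U * fOp τ b A = ∫ t in Ioc (0 : ℝ) b, U * (A * resolvent A (t : ℂ)) ∂τ :=
      ((ContinuousLinearMap.mul ℂ (X →L[ℂ] X) U).integral_comp_comm hint).symm
    have i1 : IntegrableOn (fun t : ℝ => A * resolvent A (t : ℂ) * U) (Ioc 0 b) τ :=
      ((ContinuousLinearMap.mul ℂ (X →L[ℂ] X)).flip U).integrable_comp hint
    have i2 : IntegrableOn (fun t : ℝ => U * (A * resolvent A (t : ℂ))) (Ioc 0 b) τ :=
      (ContinuousLinearMap.mul ℂ (X →L[ℂ] X) U).integrable_comp hint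
    rw [e1, e2, ← integral_sub i1 i2]
    have e3 : MA ^ 2 * (∫ t in Ioc (0 : ℝ) b, 1 / t ∂τ) * ‖A * U - U * A‖ =
        ∫ t in Ioc (0 : ℝ) b, MA ^ 2 * (1 / t) * ‖A * U - U * A‖ ∂τ := by
      rw [integral_mul_const, integral_const_mul]
    rw [e3]
    refine norm_integral_le_of_norm_le ((hτ.const_mul _).mul_const _) ?_
    refine (ae_restrict_iff' measurableSet_Ioc).2 (Eventually.of_forall fun t ht => ?_)
    obtain ⟨hr, hn⟩ := hA t ht
    have ht0 : 0 < t := ht.1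
    rw [comm_pointwise U A _ hr, norm_smul, Complex.norm_real, Real.norm_of_nonneg ht0.le]
    calc t * ‖resolvent A (t : ℂ) * (A * U - U * A) * resolvent A (t : ℂ)‖
        ≤ t * (‖resolvent A (t : ℂ)‖ * ‖A * U - U * A‖ * ‖resolvent A (t : ℂ)‖) := by
          gcongr
          exact (norm_mul_le _ _).trans (by gcongr; exact norm_mul_le _ _)
      _ ≤ t * (MA / t * ‖A * U - U * A‖ * (MA / t)) := by gcongr
      _ = MA ^ 2 * (1 / t) * ‖A * U - U * A‖ := by field_simp
  · have : fOp τ b A = 0 := integral_undef hint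
    rw [this]
    simp only [zero_mul, mul_zero, sub_self, norm_zero]
    positivity
end
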